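/- Let M ≥ 0, N ≥ 1, ℓ ∈ ℂ^N, k ∈ I_{M,N}, i ∈ {1,…,M}, r ∈ {1,…,N}, x ∈ ℂ and t ∈ ℂ^N. At every point where all theta factors in the denominators of u_{k;i}(x;t) and u_{k;i}(x;t+τe_r) are nonzero, one has u_{k;i}(x; t + τ e_r) = c · u_{k;i}(x; t), where c = 1 if r < k_i, c = e^{2(ξ₊+ξ₋−η) + 4(∑_{s>k_i} ℓ_s − M + i)η} if r = k_i, and c = e^{−4 ℓ_r η} if r > k_i; here e_r is the r-th standard basis vector of ℂ^N. -/

import Mathlib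

open Complex MeasureTheory

noncomputable section

namespace BQKZ

/-- `(z;p)_∞ = ∏_{m ≥ 0} (1 - z pᵐ)`; used with `p = q²`. -/
def poch (p z : ℂ) : ℂ := ∏' m : ℕ, (1 - z * p ^ m)

/-- renormalized Jacobi theta `θ(z) = (z;p)_∞ (p z⁻¹;p)_∞`, with `p = q²`. -/
def theta (p z : ℂ) : ℂ := poch p z * poch p (p * z⁻¹)

/-- `q² = e^{2τ}` where `q = e^τ`. -/
def qsq (τ : ℂ) : ℂ := exp (2 * τ)

/-- `ξ̃₊ = ξ₊ - η/2 - τ/2`. -/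
def xiP (τ η ξp : ℂ) : ℂ := ξp - η / 2 - τ / 2

/-- `ξ̃₋ = ξ₋ - η/2`. -/
def xiM (η ξm : ℂ) : ℂ := ξm - η / 2

/-- `n_k(r) = #{i : k i = r}`. -/
def nk {M N : ℕ} (k : Fin M → Fin N) (r : Fin N) : ℕ :=
  (Finset.univ.filter fun i => k i = r).card

/-- `φ_{k;r}`. -/
def phiC (η ξp ξm : ℂ) {N M : ℕ} (ℓ : Fin N → ℂ) (k : Fin M → Fin N) (r : Fin N) : ℂ :=
  (∏ i ∈ Finset.univ.filter fun i : Fin M => k i = r,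
      exp (2 * (η - ξp - ξm) +
        4 * ((M : ℂ) - ((i : ℕ) + 1) - ∑ s ∈ Finset.univ.filter fun s : Fin N => r ≤ s, ℓ s) * η)) *
    exp (-4 * ℓ r * η * ((Finset.univ.filter fun i : Fin M => r < k i).card : ℂ))

/-- `Φ_k(t)`. -/
def PhiF (τ η ξp ξm : ℂ) {N M : ℕ} (ℓ : Fin N → ℂ) (k : Fin M → Fin N) (t : Fin N → ℂ) : ℂ :=
  ∏ r, theta (qsq τ) (exp (2 * t r)) / theta (qsq τ) (phiC η ξp ξm ℓ k r * exp (2 * t r))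

/-- `F(x;t)`. -/
def Ffun (τ η : ℂ) {N : ℕ} (ℓ : Fin N → ℂ) (x : ℂ) (t : Fin N → ℂ) : ℂ :=
  ∏ s, (poch (qsq τ) (exp (-2 * (t s + x - ℓ s * η))) * poch (qsq τ) (exp (-2 * (t s - x - ℓ s * η)))) /
       (poch (qsq τ) (exp (-2 * (t s + x + ℓ s * η))) * poch (qsq τ) (exp (-2 * (t s - x + ℓ s * η))))

/-- `g(x)`. -/
def gfun (τ η ξp ξm : ℂ) (x : ℂ) : ℂ :=
  (poch (qsq τ) (qsq τ * exp (2 * (xiP τ η ξp - x))) * poch (qsq τ) (qsq τ * exp (2 * (xiM η ξm - x)))) /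
  (poch (qsq τ) (exp (2 * (-xiP τ η ξp - x))) * poch (qsq τ) (exp (2 * (-xiM η ξm - x))))

/-- `h(x)`. -/
def hfun (τ η : ℂ) (x : ℂ) : ℂ :=
  (1 - exp (-2 * x)) * poch (qsq τ) (qsq τ * exp (-2 * (x + η))) / poch (qsq τ) (exp (-2 * (x - η)))

/-- `ψ_{k;i}`. -/
def psiC (τ η ξp ξm : ℂ) {N M : ℕ} (ℓ : Fin N → ℂ) (k : Fin M → Fin N) (i : Fin M) : ℂ :=
  xiP τ η ξp + xiM η ξm + τ + ℓ (k i) * η +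
    2 * ((∑ s ∈ Finset.univ.filter fun s : Fin N => k i < s, ℓ s) - (M : ℂ) + ((i : ℕ) + 1)) * η

/-- `u_{k;i}(x;t)`. -/
def ufun (τ η ξp ξm : ℂ) {N M : ℕ} (ℓ : Fin N → ℂ) (k : Fin M → Fin N) (i : Fin M) (x : ℂ)
    (t : Fin N → ℂ) : ℂ :=
  exp (-t (k i)) * theta (qsq τ) (exp (2 * (x - t (k i) + psiC τ η ξp ξm ℓ k i))) *
    (∏ s ∈ Finset.univ.filter fun s : Fin N => k i < s,
      theta (qsq τ) (exp (2 * (x - t s - ℓ s * η)))) /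
    ∏ s ∈ Finset.univ.filter fun s : Fin N => k i ≤ s,
      theta (qsq τ) (exp (2 * (x - t s + ℓ s * η)))

/-- `w_k(x;t)/Φ_k(t)` (the weight function with the `Φ_k` prefactor cancelled). -/
def w0 (τ η ξp ξm : ℂ) {N M : ℕ} (ℓ : Fin N → ℂ) (k : Fin M → Fin N) (x : Fin M → ℂ)
    (t : Fin N → ℂ) : ℂ :=
  (∏ i, Ffun τ η ℓ (x i) t * gfun τ η ξp ξm (x i) * ufun τ η ξp ξm ℓ k i (x i) t) *
    ∏ p ∈ Finset.univ.filter fun p : Fin M × Fin M => p.1 < p.2,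
      hfun τ η (x p.1 + x p.2) * hfun τ η (x p.1 - x p.2)

/-- the weight function `w_k(x;t)`. -/
def wfun (τ η ξp ξm : ℂ) {N M : ℕ} (ℓ : Fin N → ℂ) (k : Fin M → Fin N) (x : Fin M → ℂ)
    (t : Fin N → ℂ) : ℂ :=
  PhiF τ η ξp ξm ℓ k t * w0 τ η ξp ξm ℓ k x t

/-- sign `ε_i = ±1` encoded by a boolean. -/
def sg {M : ℕ} (ε : Fin M → Bool) (i : Fin M) : ℂ := if ε i then 1 else -1

/-- `S_M k`: rearrangements of `k`. -/
def rearr {M N : ℕ} (k : Fin M → Fin N) : Finset (Fin M → Fin N) :=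
  Finset.univ.filter fun m => ∀ r, nk m r = nk k r

/-- `β_k(x;t)`, the coefficients of the boundary Bethe vectors. -/
def betaF (η ξm : ℂ) {N M : ℕ} (ℓ : Fin N → ℂ) (k : Fin M → Fin N) (x : Fin M → ℂ)
    (t : Fin N → ℂ) : ℂ :=
  exp ((∑ i, ((nk k (k i) : ℂ) / 2 - ℓ (k i))) * η) *
    ∑ m ∈ rearr k, ∑ ε : Fin M → Bool,
      (∏ i,
          sg ε i * sinh (sg ε i * x i - xiM η ξm) / sinh (t (m i) + sg ε i * x i - ℓ (m i) * η) *
            (∏ s ∈ Finset.univ.filter fun s : Fin N => m i < s,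
              sinh (t s + sg ε i * x i + ℓ s * η) / sinh (t s + sg ε i * x i - ℓ s * η)) *
            ∏ s, sinh (t s - sg ε i * x i + ℓ s * η) / sinh (t s - sg ε i * x i - ℓ s * η)) *
        (∏ p ∈ Finset.univ.filter fun p : Fin M × Fin M => p.1 < p.2,
          sinh (sg ε p.1 * x p.1 + sg ε p.2 * x p.2 + η) /
            sinh (sg ε p.1 * x p.1 + sg ε p.2 * x p.2)) *
        ∏ p ∈ Finset.univ.filter fun p : Fin M × Fin M => m p.1 < m p.2,
          sinh (sg ε p.1 * x p.1 - sg ε p.2 * x p.2 - η) /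
            sinh (sg ε p.1 * x p.1 - sg ε p.2 * x p.2)

/-- `(ℓ,η) ∈ D^k_{M,N}`. -/
def Dmn (η : ℂ) {N M : ℕ} (ℓ : Fin N → ℂ) (k : Fin M → Fin N) : Prop :=
  ∀ r, (ℓ r * η).re > max 0 (((nk k r : ℝ) - 1) / 2 * η.re)

/-- the (0-based) position `i_k(s;r) = ∑_{s' < r} n_k(s') + s`. -/
def blockIdx {M N : ℕ} (k : Fin M → Fin N) (r : Fin N) (s : ℕ) : ℕ :=
  (∑ s' ∈ Finset.univ.filter fun s' : Fin N => s' < r, nk k s') + s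

/-- `γ ∈ Γ^k_{M,N}`. -/
def Gam (η : ℂ) {N M : ℕ} (ℓ : Fin N → ℂ) (k : Fin M → Fin N) (γ : Fin M → ℂ) : Prop :=
  (∀ i, -(ℓ (k i) * η).re < (γ i).re ∧ (γ i).re < (ℓ (k i) * η).re) ∧
    ∀ r : Fin N, ∀ s : ℕ, s + 1 < nk k r →
      ∀ (h1 : blockIdx k r s < M) (h2 : blockIdx k r (s + 1) < M),
        (γ ⟨blockIdx k r (s + 1), h2⟩).re ≤ (γ ⟨blockIdx k r s, h1⟩).re ∧
          (γ ⟨blockIdx k r (s + 1), h2⟩).re + η.re < (γ ⟨blockIdx k r s, h1⟩).re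

/-- `γ ∈ Γ^k_{M,N;τ}`. -/
def GamTau (τ η : ℂ) {N M : ℕ} (ℓ : Fin N → ℂ) (k : Fin M → Fin N) (γ : Fin M → ℂ) : Prop :=
  Gam η ℓ k γ ∧
    (∀ i, -(ℓ (k i) * η + τ).re < (γ i).re ∧ (γ i).re < (ℓ (k i) * η + τ).re) ∧
    ∀ r : Fin N, ∀ s : ℕ, s + 1 < nk k r →
      ∀ (h1 : blockIdx k r s < M) (h2 : blockIdx k r (s + 1) < M),
        (γ ⟨blockIdx k r (s + 1), h2⟩).re + (η - τ).re < (γ ⟨blockIdx k r s, h1⟩).re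

/-- `Λ₊ = max_s Re(ℓ_s η)`. -/
def Lam (η : ℂ) {N : ℕ} (ℓ : Fin N → ℂ) : ℝ := ⨆ s, (ℓ s * η).re

/-- the sector `Ã`. -/
def Atil (τ η ξp ξm : ℂ) {N : ℕ} (ℓ : Fin N → ℂ) : Set (Fin N → ℂ) :=
  {t | (∀ i j : Fin N, (j : ℕ) = (i : ℕ) + 1 → (t i - t j).re > 2 * Lam η ℓ + max η.re 0) ∧
       ∀ i : Fin N, (i : ℕ) = N - 1 →
         (t i).re > Lam η ℓ + max (max (η / 2).re 0) (max (-xiP τ η ξp).re (-xiM η ξm).re)}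

/-- the sector `Ã_τ`. -/
def AtilTau (τ η ξp ξm : ℂ) {N : ℕ} (ℓ : Fin N → ℂ) : Set (Fin N → ℂ) :=
  {t | (∀ i j : Fin N, (j : ℕ) = (i : ℕ) + 1 →
          (t i - t j).re > 2 * Lam η ℓ + max η.re 0 - τ.re) ∧
       ∀ i : Fin N, (i : ℕ) = N - 1 →
         (t i).re > Lam η ℓ + max (max (η / 2).re 0) (max (-xiP τ η ξp).re (-xiM η ξm).re) - τ.re}

/-- the cone `Q₊ ⊂ ℤ^N` spanned by the simple roots `e_i - e_{i+1}` and `e_N`. -/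
def Qplus {N : ℕ} : Set (Fin N → ℤ) :=
  {α | ∃ β : Fin N → ℕ, ∀ j : Fin N,
    α j = (β j : ℤ) -
      if _h : 0 < (j : ℕ) then
        (β ⟨(j : ℕ) - 1, lt_of_le_of_lt (Nat.sub_le _ _) j.isLt⟩ : ℤ)
      else 0}

/-- the cube `[0,π]^M` over which the contour integrals are iterated. -/
def box (M : ℕ) : Set (Fin M → ℝ) := Set.univ.pi fun _ => Set.Icc (0 : ℝ) Real.pi

/-- the point of the contour `C^γ_k(t)` with parameters `s ∈ [0,π]^M`. -/
def cpt {M N : ℕ} (k : Fin M → Fin N) (γ : Fin M → ℂ) (t : Fin N → ℂ) (s : Fin M → ℝ) :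
    Fin M → ℂ := fun i => t (k i) + γ i + (s i : ℂ) * I

/-- the iterated contour integral over `C^γ_k(t)`. -/
def contourIntegral {M N : ℕ} (k : Fin M → Fin N) (γ : Fin M → ℂ) (t : Fin N → ℂ)
    (f : (Fin M → ℂ) → ℂ) : ℂ :=
  I ^ M * ∫ s in box M, f (cpt k γ t s)

/-- nonvanishing of all denominators occurring in `w_k(x;t)/Φ_k(t)`. -/
def w0DenomOK (τ η ξp ξm : ℂ) {N M : ℕ} (ℓ : Fin N → ℂ) (k : Fin M → Fin N) (x : Fin M → ℂ)
    (t : Fin N → ℂ) : Prop :=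
  (∀ s : Fin N, ∀ i : Fin M,
      poch (qsq τ) (exp (-2 * (t s + x i + ℓ s * η))) ≠ 0 ∧
      poch (qsq τ) (exp (-2 * (t s - x i + ℓ s * η))) ≠ 0) ∧
  (∀ i : Fin M,
      poch (qsq τ) (exp (2 * (-xiP τ η ξp - x i))) ≠ 0 ∧
      poch (qsq τ) (exp (2 * (-xiM η ξm - x i))) ≠ 0) ∧
  (∀ i : Fin M, ∀ s : Fin N, k i ≤ s → theta (qsq τ) (exp (2 * (x i - t s + ℓ s * η))) ≠ 0) ∧
  ∀ i j : Fin M, i < j →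
      poch (qsq τ) (exp (-2 * (x i + x j - η))) ≠ 0 ∧
      poch (qsq τ) (exp (-2 * (x i - x j - η))) ≠ 0

/-- nonvanishing of the theta denominators of `Φ_k(t)`. -/
def PhiDenomOK (τ η ξp ξm : ℂ) {N M : ℕ} (ℓ : Fin N → ℂ) (k : Fin M → Fin N)
    (t : Fin N → ℂ) : Prop :=
  ∀ r, theta (qsq τ) (phiC η ξp ξm ℓ k r * exp (2 * t r)) ≠ 0

/-- nonvanishing of all sinh denominators occurring in `β_m(x;t)` (for any rearrangement `m`). -/
def betaDenomOK (η : ℂ) {N M : ℕ} (ℓ : Fin N → ℂ) (x : Fin M → ℂ) (t : Fin N → ℂ) : Prop :=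
  (∀ s : Fin N, ∀ i : Fin M,
      sinh (t s + x i - ℓ s * η) ≠ 0 ∧ sinh (t s - x i - ℓ s * η) ≠ 0) ∧
  ∀ i j : Fin M, i < j → sinh (x i + x j) ≠ 0 ∧ sinh (x i - x j) ≠ 0

theorem poch_step (p z : ℂ) (hp : ‖p‖ < 1) : poch p z = (1 - z) * poch p (p * z) := by
  have hm : ∀ w : ℂ, Multipliable fun m : ℕ => (1 - w * p ^ m) := by
    intro w
    have : Summable fun m : ℕ => ‖-(w * p ^ m)‖ := by
      simp only [norm_neg, norm_mul, norm_pow]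
      exact (summable_geometric_of_lt_one (norm_nonneg p) hp).mul_left _
    simpa [sub_eq_add_neg] using multipliable_one_add_of_summable this
  have e : ∀ m : ℕ, 1 - z * p ^ (m + 1) = 1 - p * z * p ^ m := fun m => by ring
  unfold poch
  rw [tprod_eq_zero_mul' (f := fun m : ℕ => 1 - z * p ^ m)
    (by simpa only [e] using hm (p * z))]
  simp only [e, pow_zero, mul_one]

theorem theta_step (p w : ℂ) (hp : ‖p‖ < 1) (hp0 : p ≠ 0) (hw : w ≠ 0) :
    theta p w = -w * theta p (p * w) := by
  unfold theta
  have e : p * (p * w)⁻¹ = w⁻¹ := by field_simp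
  rw [e, poch_step p w hp, poch_step p w⁻¹ hp]
  field_simp
  ring

theorem theta_shift (τ a : ℂ) (hτ : τ.re < 0) :
    theta (qsq τ) (exp (2 * (a - τ))) = -exp (2 * (a - τ)) * theta (qsq τ) (exp (2 * a)) := by
  have hp : ‖qsq τ‖ < 1 := by
    unfold qsq
    rw [Complex.norm_exp, Real.exp_lt_one_iff]
    have : (2 * τ).re = 2 * τ.re := by simp
    linarith
  rw [theta_step _ _ hp (exp_ne_zero _) (exp_ne_zero _)]
  have e : qsq τ * exp (2 * (a - τ)) = exp (2 * a) := by
    unfold qsq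
    rw [← exp_add]
    ring_nf
  rw [e]

theorem theta_ite (τ x y b : ℂ) (hτ : τ.re < 0) (P : Prop) [Decidable P] :
    theta (qsq τ) (exp (2 * (x - (y + if P then τ else 0) + b))) =
      (if P then -exp (2 * (x - y + b - τ)) else 1) * theta (qsq τ) (exp (2 * (x - y + b))) := by
  split_ifs
  · rw [← theta_shift τ _ hτ]
    ring_nf
  · simp

theorem prod_theta_ite (τ x : ℂ) (hτ : τ.re < 0) {N : ℕ} (S : Finset (Fin N)) (r : Fin N)
    (t b : Fin N → ℂ) :
    ∏ s ∈ S, theta (qsq τ) (exp (2 * (x - (t s + if s = r then τ else 0) + b s))) =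
      (if r ∈ S then -exp (2 * (x - t r + b r - τ)) else 1) *
        ∏ s ∈ S, theta (qsq τ) (exp (2 * (x - t s + b s))) := by
  simp only [theta_ite _ _ _ _ hτ, Finset.prod_mul_distrib, Finset.prod_ite_eq']

/-- functional equation for `u_{k;i}(x; t + τ e_r)`. -/
theorem stmt9 (τ η ξp ξm : ℂ) (hτ : τ.re < 0) (M N : ℕ) (hN : 1 ≤ N)
    (ℓ : Fin N → ℂ) (k : Fin M → Fin N) (hk : Monotone k) (i : Fin M) (r : Fin N)
    (x : ℂ) (t : Fin N → ℂ)
    (h1 : ∀ s : Fin N, k i ≤ s → theta (qsq τ) (exp (2 * (x - t s + ℓ s * η))) ≠ 0)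
    (h2 : ∀ s : Fin N, k i ≤ s →
      theta (qsq τ) (exp (2 * (x - (t s + if s = r then τ else 0) + ℓ s * η))) ≠ 0) :
    ufun τ η ξp ξm ℓ k i x (fun s => t s + if s = r then τ else 0) =
      (if r < k i then 1
        else if r = k i then
          exp (2 * (ξp + ξm - η) +
            4 * ((∑ s ∈ Finset.univ.filter fun s : Fin N => k i < s, ℓ s) - (M : ℂ) +
                ((i : ℕ) + 1)) * η)
        else exp (-4 * ℓ r * η)) *
        ufun τ η ξp ξm ℓ k i x t := by
  have hn := prod_theta_ite τ x hτ (Finset.univ.filter fun s : Fin N => k i < s) r t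
    (fun s => -(ℓ s * η))
  have hd := prod_theta_ite τ x hτ (Finset.univ.filter fun s : Fin N => k i ≤ s) r t
    (fun s => ℓ s * η)
  simp only [← sub_eq_add_neg, Finset.mem_filter, Finset.mem_univ, true_and] at hn hd
  unfold ufun
  rw [hn, hd, theta_ite _ _ _ _ hτ]
  generalize (∏ s ∈ Finset.univ.filter fun s : Fin N => k i < s,
      theta (qsq τ) (exp (2 * (x - t s - ℓ s * η)))) = A
  generalize (∏ s ∈ Finset.univ.filter fun s : Fin N => k i ≤ s,
      theta (qsq τ) (exp (2 * (x - t s + ℓ s * η)))) = B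
  generalize theta (qsq τ) (exp (2 * (x - t (k i) + psiC τ η ξp ξm ℓ k i))) = C
  rcases lt_trichotomy r (k i) with h | h | h
  · simp [h, h.not_gt, h.not_ge, h.ne']
  · subst h
    simp only [lt_irrefl, le_refl, if_true, if_false, one_mul]
    have e : exp (-(t (k i) + τ)) * exp (2 * (x - t (k i) + psiC τ η ξp ξm ℓ k i - τ)) =
        exp (2 * (ξp + ξm - η) +
            4 * ((∑ s ∈ Finset.univ.filter fun s : Fin N => k i < s, ℓ s) - (M : ℂ) +
                ((i : ℕ) + 1)) * η) * exp (-t (k i)) *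
          exp (2 * (x - t (k i) + ℓ (k i) * η - τ)) := by
      simp only [← exp_add]
      congr 1
      unfold psiC xiP xiM
      ring
    have h0 := exp_ne_zero (2 * (x - t (k i) + ℓ (k i) * η - τ))
    rw [← mul_div_assoc, neg_mul (exp (2 * (x - t (k i) + ℓ (k i) * η - τ))), div_neg,
      ← neg_div, mul_comm (exp (2 * (x - t (k i) + ℓ (k i) * η - τ))) B,
      ← div_div, div_eq_iff h0, div_mul_eq_mul_div]
    congr 1
    linear_combination C * A * e
  · simp only [h, h.not_gt, h.le, h.ne, h.ne', if_true, if_false, one_mul, add_zero]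
    have e : exp (2 * (x - t r - ℓ r * η - τ)) =
        exp (-4 * ℓ r * η) * exp (2 * (x - t r + ℓ r * η - τ)) := by
      rw [← exp_add]
      congr 1
      ring
    have h0 := exp_ne_zero (2 * (x - t r + ℓ r * η - τ))
    rw [e, ← mul_div_assoc, neg_mul (exp (2 * (x - t r + ℓ r * η - τ))), div_neg, ← neg_div,
      mul_comm (exp (2 * (x - t r + ℓ r * η - τ))) B, ← div_div, div_eq_iff h0, div_mul_eq_mul_div]
    congr 1
    ring

end BQKZ
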